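/- (Theorem 4.1(ii), weak duality for the Mond–Weir robust dual.) Let z ∈ F and let (y, y*, μ) be feasible for the Mond–Weir robust dual (with respect to the subdifferential data S, T). If (f,g) is type II pseudo convex at y, then f(z) − f(y) ∉ −(K \ {0}). -/

import Mathlib

/-!
If `f z - f y ∈ -(K \ {0})`, then `z ≠ y` and `y' (f z) ≤ y' (f y)`, so type II pseudo convexity
makes the objective subgradient negative in the direction `z - y`. Whenever `0 < μ i`, the sign
condition of the dual gives `g i z u ≤ 0 ≤ g i y u` at every worst-case scenario `u`, so each set
`T i y u` lies in the half-space of functionals that are nonpositive at `z - y`. This half-space is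
convex and weak* closed, so it also contains the `i`-th constraint subgradient of the dual.
Evaluating the stationarity equation at `z - y` now writes `0` as a negative number plus
nonpositive ones.
-/

section ClosedHalfSpace

variable {𝕜 E F : Type*} [Semiring 𝕜] [PartialOrder 𝕜]
  [AddCommMonoid E] [Module 𝕜 E] [TopologicalSpace E]
  [AddCommMonoid F] [PartialOrder F] [IsOrderedAddMonoid F] [Module 𝕜 F] [PosSMulMono 𝕜 F]
  [TopologicalSpace F] [OrderClosedTopology F]

theorem apply_le_of_mem_closure_convexHull {φ : E →L[𝕜] F} {s : Set E} {c : F}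
    (hs : ∀ x ∈ s, φ x ≤ c) {x : E} (hx : x ∈ closure (convexHull 𝕜 s)) : φ x ≤ c :=
  closure_minimal (convexHull_min hs (convex_halfSpace_le φ.toLinearMap.isLinear c))
    (isClosed_le φ.continuous continuous_const) hx

end ClosedHalfSpace

section WeakDualEval

variable {𝕜 E : Type*} [CommSemiring 𝕜] [TopologicalSpace 𝕜] [ContinuousAdd 𝕜]
  [ContinuousConstSMul 𝕜 𝕜] [AddCommMonoid E] [Module 𝕜 E] [TopologicalSpace E]

/-- Evaluation at `x`, as a continuous linear functional on the weak* dual. -/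
def weakDualEval (x : E) : WeakDual 𝕜 E →L[𝕜] 𝕜 where
  toLinearMap := (topDualPairing 𝕜 E).flip x
  cont := WeakDual.eval_continuous x

theorem weakDualEval_apply (x : E) (w : WeakDual 𝕜 E) : weakDualEval x w = w x := rfl

end WeakDualEval

section RobustDuality

variable {Z Y 𝒰 ι : Type*}

/-- The maximizers of `h` over the uncertainty set; the paper's `𝒰ᵢ(y)` is
`worstScenarios (g i y)`. -/
def worstScenarios (h : 𝒰 → ℝ) : Set 𝒰 :=
  {u | ∀ u', h u' ≤ h u}

/-- The robust feasible set `F`: the points satisfying every constraint in every scenario. -/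
def robustFeasibleSet (g : ι → Z → 𝒰 → ℝ) : Set Z :=
  {z | ∀ i u, g i z u ≤ 0}

variable [AddCommGroup Z] [Module ℝ Z] [TopologicalSpace Z]
  [AddCommGroup Y] [Module ℝ Y] [TopologicalSpace Y]

/-- Type II pseudo convexity of `(f, g)` at `y` with respect to the subdifferential data `S`, `T`.
Membership in the dual cone of `K` is spelled out as nonnegativity on `K`. -/
structure IsTypeIIPseudoConvexAt (K : Set Y) (f : Z → Y) (g : ι → Z → 𝒰 → ℝ)
    (S : Z → (Y →L[ℝ] ℝ) → Set (WeakDual ℝ Z)) (T : ι → Z → 𝒰 → Set (WeakDual ℝ Z))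
    (y : Z) : Prop where
  objective : ∀ z, z ≠ y → ∀ w : Y →L[ℝ] ℝ, (∀ k ∈ K, 0 ≤ w k) → w ≠ 0 →
    w (f z) ≤ w (f y) → ∀ v ∈ S y w, v (z - y) < 0
  constraint : ∀ z u i, g i z u ≤ g i y u → ∀ w ∈ T i y u, w (z - y) ≤ 0

/-- Feasibility of the triple `(y, y', μ)` for the Mond–Weir robust dual: `v` and `p i` in
`stationary` are the subgradients `v*` and `uᵢ*`. -/
structure IsMondWeirFeasible [Fintype ι] (K : Set Y) (g : ι → Z → 𝒰 → ℝ)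
    (S : Z → (Y →L[ℝ] ℝ) → Set (WeakDual ℝ Z)) (T : ι → Z → 𝒰 → Set (WeakDual ℝ Z))
    (y : Z) (y' : Y →L[ℝ] ℝ) (μ : ι → ℝ) : Prop where
  nonneg_on : ∀ k ∈ K, 0 ≤ y' k
  ne_zero : y' ≠ 0
  multiplier_nonneg : ∀ i, 0 ≤ μ i
  stationary : ∃ v ∈ S y y', ∃ p : ι → WeakDual ℝ Z,
    (∀ i, p i ∈ closure (convexHull ℝ (⋃ u ∈ worstScenarios (g i y), T i y u))) ∧
      0 = v + ∑ i, μ i • p i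
  sign : ∀ i, ∀ u ∈ worstScenarios (g i y), 0 ≤ μ i * g i y u

theorem mul_apply_sub_nonpos_of_mem_closure_convexHull {h : Z → 𝒰 → ℝ}
    {D : 𝒰 → Set (WeakDual ℝ Z)} {y z : Z} {c : ℝ} (hc : 0 ≤ c)
    (hy : ∀ u ∈ worstScenarios (h y), 0 ≤ c * h y u) (hz : ∀ u, h z u ≤ 0)
    (hD : ∀ u, h z u ≤ h y u → ∀ w ∈ D u, w (z - y) ≤ 0) {p : WeakDual ℝ Z}
    (hp : p ∈ closure (convexHull ℝ (⋃ u ∈ worstScenarios (h y), D u))) :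
    c * p (z - y) ≤ 0 := by
  obtain rfl | hc_pos := hc.eq_or_lt
  · rw [zero_mul]
  have hhalf : ∀ w ∈ ⋃ u ∈ worstScenarios (h y), D u, weakDualEval (z - y) w ≤ 0 := by
    intro w hw
    obtain ⟨u, hu, hwu⟩ := Set.mem_iUnion₂.mp hw
    have hyu : 0 ≤ h y u := nonneg_of_mul_nonneg_right (hy u hu) hc_pos
    exact hD u ((hz u).trans hyu) w hwu
  exact mul_nonpos_of_nonneg_of_nonpos hc (apply_le_of_mem_closure_convexHull hhalf hp)

variable [Fintype ι] {K : Set Y} {f : Z → Y} {g : ι → Z → 𝒰 → ℝ}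
  {S : Z → (Y →L[ℝ] ℝ) → Set (WeakDual ℝ Z)} {T : ι → Z → 𝒰 → Set (WeakDual ℝ Z)}
  {z y : Z} {y' : Y →L[ℝ] ℝ} {μ : ι → ℝ}

theorem IsMondWeirFeasible.apply_lt_apply (hdual : IsMondWeirFeasible K g S T y y' μ)
    (hconv : IsTypeIIPseudoConvexAt K f g S T y) (hz : z ∈ robustFeasibleSet g) (hne : z ≠ y) :
    y' (f y) < y' (f z) := by
  obtain ⟨v, hv, p, hp, hstat⟩ := hdual.stationary
  by_contra! hle
  have hobjective : v (z - y) < 0 :=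
    hconv.objective z hne y' hdual.nonneg_on hdual.ne_zero hle v hv
  have hconstraint : ∑ i, μ i * p i (z - y) ≤ 0 := Finset.sum_nonpos fun i _ ↦
    mul_apply_sub_nonpos_of_mem_closure_convexHull (hdual.multiplier_nonneg i) (hdual.sign i)
      (hz i) (fun u ↦ hconv.constraint z u i) (hp i)
  refine lt_irrefl (0 : ℝ) ?_
  calc
    0 = weakDualEval (z - y) (v + ∑ i, μ i • p i) := by rw [← hstat, map_zero]
    _ = weakDualEval (z - y) v + ∑ i, μ i * weakDualEval (z - y) (p i) := by
      simp only [map_add, map_sum, map_smul, smul_eq_mul]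
    _ = v (z - y) + ∑ i, μ i * p i (z - y) := by simp only [weakDualEval_apply]
    _ < 0 := add_neg_of_neg_of_nonpos hobjective hconstraint

theorem weak_duality_typeII_general (hdual : IsMondWeirFeasible K g S T y y' μ)
    (hconv : IsTypeIIPseudoConvexAt K f g S T y) (hz : z ∈ robustFeasibleSet g) :
    f z - f y ∉ -(K \ {0}) := by
  rintro ⟨hK, hne_zero⟩
  have hne : z ≠ y := by
    rintro rfl
    simp at hne_zero
  have hlt : y' (f y) < y' (f z) := hdual.apply_lt_apply hconv hz hne
  have hle : 0 ≤ y' (f y) - y' (f z) := by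
    simpa using hdual.nonneg_on _ hK
  linarith

end RobustDuality

theorem weak_duality_typeII
    {Z Y : Type*} [NormedAddCommGroup Z] [NormedSpace ℝ Z]
    [NormedAddCommGroup Y] [NormedSpace ℝ Y]
    (K : Set Y) (hKconvex : Convex ℝ K)
    (hKcone : ∀ (c : ℝ), 0 < c → ∀ y ∈ K, c • y ∈ K)
    (hKpointed : K ∩ (-K) = {0})
    {𝒰 : Type*} [Nonempty 𝒰]
    (n : ℕ) (hn : 0 < n)
    (g : Fin n → Z → 𝒰 → ℝ)
    (f : Z → Y)
    -- subdifferential data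
    (S : Z → (Y →L[ℝ] ℝ) → Set (WeakDual ℝ Z))
    (T : Fin n → Z → 𝒰 → Set (WeakDual ℝ Z))
    -- a robust feasible point z
    (z : Z) (hzF : ∀ i : Fin n, ∀ u : 𝒰, g i z u ≤ 0)
    (y : Z)
    -- (y, y', μ) is feasible for the Mond-Weir robust dual
    (y' : Y →L[ℝ] ℝ) (hy'K : ∀ k ∈ K, 0 ≤ y' k) (hy'0 : y' ≠ 0)
    (μ : Fin n → ℝ) (hμ : ∀ i, 0 ≤ μ i)
    (v' : WeakDual ℝ Z) (hv' : v' ∈ S y y')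
    (u' : Fin n → WeakDual ℝ Z)
    (hu' : ∀ i, u' i ∈
      closure (convexHull ℝ (⋃ u ∈ {u : 𝒰 | ∀ u', g i y u' ≤ g i y u}, T i y u)))
    (hfeas : (0 : WeakDual ℝ Z) = v' + ∑ i, μ i • u' i)
    (hsign : ∀ i : Fin n, ∀ u : 𝒰, (∀ u', g i y u' ≤ g i y u) → 0 ≤ μ i * g i y u)
    -- (f, g) is type II pseudo convex at y
    (hpcII_a : ∀ z : Z, z ≠ y → ∀ w : Y →L[ℝ] ℝ, (∀ k ∈ K, 0 ≤ w k) → w ≠ 0 →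
      w (f z) ≤ w (f y) → ∀ v ∈ S y w, v (z - y) < 0)
    (hpcII_b : ∀ z : Z, ∀ u : 𝒰, ∀ i : Fin n, g i z u ≤ g i y u →
      ∀ w ∈ T i y u, w (z - y) ≤ 0)
 :
    f z - f y ∉ -(K \ {0}) :=
  weak_duality_typeII_general ⟨hy'K, hy'0, hμ, ⟨v', hv', u', hu', hfeas⟩, hsign⟩
    ⟨hpcII_a, hpcII_b⟩ hzF
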